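/- Let u : ℝ² → ℝ be a bounded C² solution of Δu = F'(u) with |u| ≤ 1, and suppose F ≥ 0 on [-1,1]. Then the Modica gradient estimate holds: |∇u(x,y)|² ≤ 2 F(u(x,y)) for all (x,y) ∈ ℝ². -/

import Mathlib

open Real

/-!
Suppose first that `G > 0` and `Δ u = G'(u) + k(u)`, and let `P' = 1 / √(2 G)`, so that the
estimate `|∇u|² ≤ 2 G(u)` says that `v = P ∘ u` is `1`-Lipschitz. The chain rule gives
`Δ v = h + O(|1 - |∇v|²|)` with `h = k(u) / √(2 G(u))`. If `v` is not `1`-Lipschitz, then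
`v x - v y - |x - y| - δ |x|²` has a positive maximum at some `x ≠ y`. There `|∇v y| = 1` and
`∇v x ≈ ∇v y`, while translating `x` and `y` together gives `Δ v x - Δ v y ≲ δ`; as `δ → 0` this
contradicts `h x - h y ≥ m (v x - v y)`, which holds as soon as `k' - k G' / (2 G) ≥ m > 0`.
For `Δ u = F'(u)` with `F ≥ 0`, take `G = F + w` and `k = -w'`, where `w` is a small positive
concave function, and let `w → 0`.
-/

open Set Filter Topology InnerProductSpace Laplacian

section Laplacian

theorem iteratedDeriv_two_nonpos_of_isLocalMax {g : ℝ → ℝ} {t : ℝ} (hg : ContinuousAt g t)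
    (hmax : IsLocalMax g t) : iteratedDeriv 2 g t ≤ 0 := by
  rw [iteratedDeriv_succ, iteratedDeriv_one]
  by_contra! hpos
  have hmin : IsLocalMin g t := isLocalMin_of_deriv_deriv_pos hpos hmax.deriv_eq_zero hg
  have hconst : g =ᶠ[𝓝 t] fun _ => g t := by
    filter_upwards [hmax, hmin] with s hle hge using le_antisymm hle hge
  have hzero : deriv (deriv g) t = 0 := by
    rw [hconst.deriv.deriv_eq]
    simp
  exact hpos.ne' hzero

theorem iteratedFDeriv_two_diag_eq_iteratedDeriv_line {V W : Type*} [NormedAddCommGroup V]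
    [NormedSpace ℝ V] [NormedAddCommGroup W] [NormedSpace ℝ W] {f : V → W} {x : V}
    (hf : ContDiffAt ℝ 2 f x) (e : V) :
    iteratedFDeriv ℝ 2 f x ![e, e] = iteratedDeriv 2 (fun t : ℝ => f (x + t • e)) 0 := by
  have hline (t : ℝ) : HasDerivAt (fun t : ℝ => x + t • e) e t := by
    simpa using ((hasDerivAt_id t).smul_const e).const_add x
  have hline_zero : x + (0 : ℝ) • e = x := by simp
  have htendsto : Tendsto (fun t : ℝ => x + t • e) (𝓝 0) (𝓝 x) := by
    simpa [hline_zero] using (hline 0).continuousAt.tendsto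
  have hdiff : ∀ᶠ z in 𝓝 x, DifferentiableAt ℝ f z :=
    (hf.eventually (by simp)).mono fun z hz => hz.differentiableAt two_ne_zero
  have hderiv : deriv (fun t : ℝ => f (x + t • e)) =ᶠ[𝓝 0] fun t => fderiv ℝ f (x + t • e) e :=
    (htendsto.eventually hdiff).mono fun t ht => (ht.hasFDerivAt.comp_hasDerivAt t (hline t)).deriv
  have hfderiv : HasFDerivAt (fderiv ℝ f) (fderiv ℝ (fderiv ℝ f) x) (x + (0 : ℝ) • e) := by
    rw [hline_zero]
    exact ((hf.fderiv_right (m := 1) (by norm_num)).differentiableAt one_ne_zero).hasFDerivAt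
  rw [iteratedDeriv_succ, iteratedDeriv_one, hderiv.deriv_eq, iteratedFDeriv_two_apply]
  have hsnd : HasDerivAt (fun t : ℝ => fderiv ℝ f (x + t • e)) (fderiv ℝ (fderiv ℝ f) x e) 0 :=
    hfderiv.comp_hasDerivAt 0 (hline 0)
  exact ((ContinuousLinearMap.apply ℝ W e).hasFDerivAt.comp_hasDerivAt 0 hsnd).deriv.symm

variable {E : Type*} [NormedAddCommGroup E] [InnerProductSpace ℝ E]
  [FiniteDimensional ℝ E]

theorem laplacian_eq_sum_iteratedDeriv_line {W ι : Type*} [NormedAddCommGroup W]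
    [NormedSpace ℝ W] [Fintype ι] (b : OrthonormalBasis ι ℝ E) {f : E → W} {x : E}
    (hf : ContDiffAt ℝ 2 f x) :
    Δ f x = ∑ i, iteratedDeriv 2 (fun t : ℝ => f (x + t • b i)) 0 := by
  simp only [laplacian_eq_iteratedFDeriv_orthonormalBasis f b,
    iteratedFDeriv_two_diag_eq_iteratedDeriv_line hf]

theorem laplacian_nonpos_of_isLocalMax {f : E → ℝ} {x : E} (hmax : IsLocalMax f x)
    (hf : ContDiffAt ℝ 2 f x) : Δ f x ≤ 0 := by
  rw [laplacian_eq_sum_iteratedDeriv_line (stdOrthonormalBasis ℝ E) hf]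
  refine Finset.sum_nonpos fun i _ => ?_
  have hline : ContinuousAt (fun t : ℝ => x + t • stdOrthonormalBasis ℝ E i) 0 := by fun_prop
  have hline_zero : x + (0 : ℝ) • stdOrthonormalBasis ℝ E i = x := by simp
  apply iteratedDeriv_two_nonpos_of_isLocalMax
  · exact ContinuousAt.comp_of_eq hf.continuousAt hline hline_zero
  · rw [← hline_zero] at hmax
    exact hmax.comp_continuous (g := fun t : ℝ => x + t • stdOrthonormalBasis ℝ E i) hline

theorem laplacian_comp_const_add {W : Type*} [NormedAddCommGroup W] [NormedSpace ℝ W]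
    (f : E → W) (a x : E) :
    Δ (fun z => f (a + z)) x = Δ f (a + x) := by
  simp only [laplacian_eq_iteratedFDeriv_stdOrthonormalBasis, iteratedFDeriv_comp_add_left]

theorem laplacian_norm_sq (x : E) :
    Δ (fun z : E => ‖z‖ ^ 2) x = 2 * Module.finrank ℝ E := by
  have hline (e : E) (he : ‖e‖ = 1) :
      iteratedDeriv 2 (fun t : ℝ => ‖x + t • e‖ ^ 2) 0 = 2 := by
    have hderiv : deriv (fun t : ℝ => ‖x + t • e‖ ^ 2) = fun t => 2 * (⟪x, e⟫_ℝ + t) := by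
      ext t
      have := (((hasDerivAt_id t).smul_const e).const_add x).norm_sq.deriv
      simpa [inner_add_left, inner_smul_left, he] using this
    rw [iteratedDeriv_succ, iteratedDeriv_one, hderiv]
    simp
  rw [laplacian_eq_sum_iteratedDeriv_line (stdOrthonormalBasis ℝ E) (contDiff_norm_sq ℝ).contDiffAt]
  simp [hline, mul_comm]

theorem laplacian_comp {g : ℝ → ℝ} {f : E → ℝ} {x : E} (hg : ContDiffAt ℝ 2 g (f x))
    (hf : ContDiffAt ℝ 2 f x) :
    Δ (g ∘ f) x = deriv (deriv g) (f x) * ‖fderiv ℝ f x‖ ^ 2 + deriv g (f x) * Δ f x := by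
  set b := stdOrthonormalBasis ℝ E
  have hline (i) : ContDiffAt ℝ 2 (fun t : ℝ => f (x + t • b i)) 0 :=
    ContDiffAt.comp 0 (g := f) (by simpa using hf) (by fun_prop)
  have hderiv (i) : deriv (fun t : ℝ => f (x + t • b i)) 0 = fderiv ℝ f x (b i) :=
    (hf.differentiableAt two_ne_zero).lineDeriv_eq_fderiv
  have hchain (i) : iteratedDeriv 2 (fun t : ℝ => (g ∘ f) (x + t • b i)) 0 =
      deriv (deriv g) (f x) * fderiv ℝ f x (b i) ^ 2 +
        deriv g (f x) * iteratedDeriv 2 (fun t : ℝ => f (x + t • b i)) 0 := by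
    have := iteratedDeriv_comp_two (g := g) (by simpa using hg) (hline i)
    rw [hderiv] at this
    simpa [Function.comp_def, iteratedDeriv_succ] using this
  rw [laplacian_eq_sum_iteratedDeriv_line b (hg.comp x hf),
    laplacian_eq_sum_iteratedDeriv_line b hf, b.norm_dual]
  simp only [hchain, Finset.sum_add_distrib, Finset.mul_sum]

end Laplacian

section Plane

variable {u : ℝ → ℝ → ℝ}

theorem contDiff_comp_euclideanPlane {n : WithTop ℕ∞}
    (hu : ContDiff ℝ n (fun p : ℝ × ℝ => u p.1 p.2)) :
    ContDiff ℝ n (fun p : EuclideanSpace ℝ (Fin 2) => u (p 0) (p 1)) := by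
  have hcoords : ContDiff ℝ n (fun p : EuclideanSpace ℝ (Fin 2) => (p 0, p 1)) := by fun_prop
  exact hu.comp hcoords

theorem norm_fderiv_euclideanPlane_sq {p : EuclideanSpace ℝ (Fin 2)}
    (hu : DifferentiableAt ℝ (fun p : EuclideanSpace ℝ (Fin 2) => u (p 0) (p 1)) p) :
    ‖fderiv ℝ (fun p : EuclideanSpace ℝ (Fin 2) => u (p 0) (p 1)) p‖ ^ 2 =
      deriv (fun t => u t (p 1)) (p 0) ^ 2 + deriv (u (p 0)) (p 1) ^ 2 := by
  rw [(EuclideanSpace.basisFun (Fin 2) ℝ).norm_dual, Fin.sum_univ_two,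
    ← hu.lineDeriv_eq_fderiv, ← hu.lineDeriv_eq_fderiv]
  simp [lineDeriv, deriv_comp_const_add (fun t => u t (p 1)), deriv_comp_const_add (u (p 0))]

theorem laplacian_euclideanPlane {p : EuclideanSpace ℝ (Fin 2)}
    (hu : ContDiffAt ℝ 2 (fun p : EuclideanSpace ℝ (Fin 2) => u (p 0) (p 1)) p) :
    Δ (fun p : EuclideanSpace ℝ (Fin 2) => u (p 0) (p 1)) p =
      deriv (deriv fun t => u t (p 1)) (p 0) + deriv (deriv (u (p 0))) (p 1) := by
  have htwo (g : ℝ → ℝ) (s : ℝ) : iteratedDeriv 2 (fun t => g (s + t)) 0 = deriv (deriv g) s := by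
    rw [iteratedDeriv_comp_const_add]
    simp only [add_zero, iteratedDeriv_succ, iteratedDeriv_zero]
  rw [laplacian_eq_sum_iteratedDeriv_line (EuclideanSpace.basisFun (Fin 2) ℝ) hu,
    Fin.sum_univ_two]
  simp [htwo (fun t => u t (p 1)), htwo (u (p 0))]

end Plane

section TwoPoint

variable {E : Type*} [NormedAddCommGroup E]

/-- The functional of the doubling-of-variables argument: the excess of `v` over being
`1`-Lipschitz, penalised by `δ ‖x‖ ^ 2` so that it attains its maximum on `E × E`. -/
def twoPointFunctional (v : E → ℝ) (δ : ℝ) (p : E × E) : ℝ :=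
  v p.1 - v p.2 - ‖p.1 - p.2‖ - δ * ‖p.1‖ ^ 2

variable {v : E → ℝ} {B δ : ℝ}

theorem twoPointFunctional_le_sub_norm (hB : ∀ x, |v x| ≤ B) (hδ : 0 < δ) (p : E × E) :
    twoPointFunctional v δ p ≤ 2 * B + 1 / (4 * δ) - ‖p‖ := by
  have hsq : ‖p.1‖ - 1 / (4 * δ) ≤ δ * ‖p.1‖ ^ 2 := by
    have : δ * ‖p.1‖ ^ 2 - (‖p.1‖ - 1 / (4 * δ)) = δ * (‖p.1‖ - 1 / (2 * δ)) ^ 2 := by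
      field_simp
      ring
    have : 0 ≤ δ * (‖p.1‖ - 1 / (2 * δ)) ^ 2 := by positivity
    linarith
  have hnorm : ‖p‖ ≤ ‖p.1‖ + ‖p.1 - p.2‖ :=
    max_le (by linarith [norm_nonneg (p.1 - p.2)]) (norm_le_norm_add_norm_sub p.1 p.2)
  have hfst := (abs_le.mp (hB p.1)).2
  have hsnd := (abs_le.mp (hB p.2)).1
  unfold twoPointFunctional
  linarith

theorem exists_forall_twoPointFunctional_le [ProperSpace E] (hv : Continuous v)
    (hB : ∀ x, |v x| ≤ B) (hδ : 0 < δ) :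
    ∃ p, ∀ q, twoPointFunctional v δ q ≤ twoPointFunctional v δ p := by
  have hcont : Continuous (twoPointFunctional v δ) := by
    unfold twoPointFunctional
    fun_prop
  refine hcont.exists_forall_ge_of_isBounded 0 (isBounded_iff_forall_norm_le.2
    ⟨2 * B + 1 / (4 * δ) - twoPointFunctional v δ 0, fun p hp => ?_⟩)
  exact le_sub_comm.1 (hp.out.trans (twoPointFunctional_le_sub_norm hB hδ p))

variable [InnerProductSpace ℝ E] {x y : E}

theorem fderiv_snd_of_twoPointFunctional_le
    (hmax : ∀ q, twoPointFunctional v δ q ≤ twoPointFunctional v δ (x, y)) (hxy : x ≠ y)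
    (hv : DifferentiableAt ℝ v y) : fderiv ℝ v y = fderiv ℝ norm (x - y) := by
  have hnorm : HasFDerivAt norm (fderiv ℝ norm (x - y)) (x - y) :=
    ((contDiffAt_norm ℝ (sub_ne_zero.2 hxy)).differentiableAt one_ne_zero).hasFDerivAt
  have hlocal : IsLocalMax (fun z => -v z - ‖x - z‖) y :=
    Eventually.of_forall fun z => by
      have := hmax (x, z)
      simp only [twoPointFunctional] at this
      linarith
  have hzero := hlocal.hasFDerivAt_eq_zero
    (hv.hasFDerivAt.neg.sub (hnorm.comp y ((hasFDerivAt_id y).const_sub x)))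
  rw [ContinuousLinearMap.comp_neg, ContinuousLinearMap.comp_id, sub_neg_eq_add,
    neg_add_eq_zero] at hzero
  exact hzero

theorem fderiv_fst_of_twoPointFunctional_le
    (hmax : ∀ q, twoPointFunctional v δ q ≤ twoPointFunctional v δ (x, y)) (hxy : x ≠ y)
    (hv : DifferentiableAt ℝ v x) :
    fderiv ℝ v x = fderiv ℝ norm (x - y) + (2 * δ) • innerSL ℝ x := by
  have hnorm : HasFDerivAt norm (fderiv ℝ norm (x - y)) (x - y) :=
    ((contDiffAt_norm ℝ (sub_ne_zero.2 hxy)).differentiableAt one_ne_zero).hasFDerivAt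
  have hlocal : IsLocalMax (fun z => v z - ‖z - y‖ - δ * ‖z‖ ^ 2) x :=
    Eventually.of_forall fun z => by
      have := hmax (z, y)
      simp only [twoPointFunctional] at this
      linarith
  have hzero := hlocal.hasFDerivAt_eq_zero
    ((hv.hasFDerivAt.sub (hnorm.comp x ((hasFDerivAt_id x).sub_const y))).sub
      ((hasStrictFDerivAt_norm_sq x).hasFDerivAt.const_mul δ))
  rw [ContinuousLinearMap.comp_id, sub_sub, sub_eq_zero] at hzero
  rw [hzero, ← Nat.cast_smul_eq_nsmul ℝ, smul_smul, mul_comm 2 δ, Nat.cast_ofNat]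

theorem norm_two_mul_smul_innerSL_sq_le (hB : ∀ x, |v x| ≤ B) (hδ : 0 ≤ δ)
    (hnonneg : 0 ≤ twoPointFunctional v δ (x, y)) :
    ‖(2 * δ) • innerSL ℝ x‖ ^ 2 ≤ 8 * B * δ := by
  have hpenalty : δ * ‖x‖ ^ 2 ≤ 2 * B := by
    have hx := (abs_le.mp (hB x)).2
    have hy := (abs_le.mp (hB y)).1
    simp only [twoPointFunctional] at hnonneg
    linarith [norm_nonneg (x - y)]
  calc ‖(2 * δ) • innerSL ℝ x‖ ^ 2 = 4 * δ * (δ * ‖x‖ ^ 2) := by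
        rw [norm_smul, innerSL_apply_norm, Real.norm_of_nonneg (by positivity)]
        ring
    _ ≤ 4 * δ * (2 * B) := by gcongr
    _ = 8 * B * δ := by ring

theorem laplacian_sub_laplacian_le_of_twoPointFunctional_le [FiniteDimensional ℝ E]
    (hmax : ∀ q, twoPointFunctional v δ q ≤ twoPointFunctional v δ (x, y))
    (hvx : ContDiffAt ℝ 2 v x) (hvy : ContDiffAt ℝ 2 v y) :
    Δ v x - Δ v y ≤ 2 * Module.finrank ℝ E * δ := by
  -- Moving both points by the same `z` leaves the non-smooth term `‖x - y‖` unchanged.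
  have hlocal : IsLocalMax
      ((fun z => v (x + z)) - (fun z => v (y + z)) - δ • fun z => ‖x + z‖ ^ 2) 0 :=
    Eventually.of_forall fun z => by
      have := hmax (x + z, y + z)
      simp only [twoPointFunctional, add_sub_add_right_eq_sub] at this
      simp only [Pi.sub_apply, Pi.smul_apply, smul_eq_mul, add_zero]
      linarith
  have hx : ContDiffAt ℝ 2 (fun z => v (x + z)) 0 :=
    ContDiffAt.comp 0 (g := v) (by simpa using hvx) (by fun_prop)
  have hy : ContDiffAt ℝ 2 (fun z => v (y + z)) 0 :=
    ContDiffAt.comp 0 (g := v) (by simpa using hvy) (by fun_prop)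
  have hsub : ContDiffAt ℝ 2 ((fun z => v (x + z)) - fun z => v (y + z)) 0 := hx.sub hy
  have hsq : ContDiffAt ℝ 2 (fun z => ‖x + z‖ ^ 2) 0 :=
    ((contDiff_norm_sq ℝ).comp (contDiff_const.add contDiff_id)).contDiffAt
  have hpenalty : ContDiffAt ℝ 2 (δ • fun z => ‖x + z‖ ^ 2) 0 := hsq.const_smul δ
  have hle := laplacian_nonpos_of_isLocalMax hlocal (hsub.sub hpenalty)
  rw [hsub.laplacian_sub hpenalty, hx.laplacian_sub hy, laplacian_smul δ hsq,
    laplacian_comp_const_add, laplacian_comp_const_add,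
    laplacian_comp_const_add (fun z => ‖z‖ ^ 2), laplacian_norm_sq, add_zero, add_zero,
    smul_eq_mul] at hle
  linarith

variable [FiniteDimensional ℝ E]

theorem exists_almost_critical_pair (hv : Differentiable ℝ v)
    (hv_two : ∀ x, fderiv ℝ v x ≠ 0 → ContDiffAt ℝ 2 v x) (hB : ∀ x, |v x| ≤ B) (hδ : 0 < δ)
    (hBδ : 8 * B * δ < 1) {σ : ℝ} (hσ : 0 < σ) {p : E × E}
    (hp : σ ≤ twoPointFunctional v δ p) :
    ∃ x y, σ ≤ v x - v y ∧ fderiv ℝ v x ≠ 0 ∧ ‖fderiv ℝ v y‖ = 1 ∧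
      ‖fderiv ℝ v x - fderiv ℝ v y‖ ^ 2 ≤ 8 * B * δ ∧
      Δ v x - Δ v y ≤ 2 * Module.finrank ℝ E * δ := by
  obtain ⟨⟨x, y⟩, hmax⟩ := exists_forall_twoPointFunctional_le hv.continuous hB hδ
  have hσxy : σ ≤ twoPointFunctional v δ (x, y) := hp.trans (hmax p)
  have hσv : σ ≤ v x - v y := by
    have : 0 ≤ δ * ‖x‖ ^ 2 := by positivity
    simp only [twoPointFunctional] at hσxy
    linarith [norm_nonneg (x - y)]
  have hxy : x ≠ y := by
    rintro rfl
    linarith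
  have hfst := fderiv_fst_of_twoPointFunctional_le hmax hxy (hv x)
  have hsnd := fderiv_snd_of_twoPointFunctional_le hmax hxy (hv y)
  have hunit : ‖fderiv ℝ v y‖ = 1 := by
    have : Nontrivial E := ⟨x, y, hxy⟩
    rw [hsnd]
    exact norm_fderiv_norm
      ((contDiffAt_norm ℝ (sub_ne_zero.2 hxy)).differentiableAt one_ne_zero)
  have hclose : ‖fderiv ℝ v x - fderiv ℝ v y‖ ^ 2 ≤ 8 * B * δ := by
    rw [hfst, hsnd, add_sub_cancel_left]
    exact norm_two_mul_smul_innerSL_sq_le hB hδ.le (hσ.le.trans hσxy)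
  have hx_ne : fderiv ℝ v x ≠ 0 := by
    intro hx
    rw [hx, zero_sub, norm_neg, hunit] at hclose
    linarith
  have hy_ne : fderiv ℝ v y ≠ 0 := by
    rw [← norm_ne_zero_iff, hunit]
    exact one_ne_zero
  exact ⟨x, y, hσv, hx_ne, hunit, hclose,
    laplacian_sub_laplacian_le_of_twoPointFunctional_le hmax (hv_two x hx_ne) (hv_two y hy_ne)⟩

theorem abs_one_sub_norm_sq_le {V : Type*} [SeminormedAddCommGroup V] {a b : V} {r : ℝ}
    (hb : ‖b‖ = 1) (hab : ‖a - b‖ ≤ r) : |1 - ‖a‖ ^ 2| ≤ r * (2 + r) := by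
  have hdiff : |‖a‖ - 1| ≤ r := hb ▸ (abs_norm_sub_norm_le a b).trans hab
  have hsum : 1 + ‖a‖ ≤ 2 + r := by linarith [(abs_le.mp hdiff).2]
  calc |1 - ‖a‖ ^ 2| = |‖a‖ - 1| * (1 + ‖a‖) := by
        rw [show 1 - ‖a‖ ^ 2 = -((‖a‖ - 1) * (1 + ‖a‖)) by ring, abs_neg, abs_mul,
          abs_of_nonneg (by positivity : 0 ≤ 1 + ‖a‖)]
    _ ≤ r * (2 + r) := by
        gcongr
        exact (abs_nonneg _).trans hdiff

theorem sub_le_norm_sub_of_abs_laplacian_sub_le (hv : Differentiable ℝ v)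
    (hv_two : ∀ x, fderiv ℝ v x ≠ 0 → ContDiffAt ℝ 2 v x) (hB : ∀ x, |v x| ≤ B)
    {h : E → ℝ} {m C : ℝ} (hm : 0 < m) (hC : 0 ≤ C)
    (hmono : ∀ x y, v y ≤ v x → m * (v x - v y) ≤ h x - h y)
    (hΔ : ∀ x, fderiv ℝ v x ≠ 0 → |Δ v x - h x| ≤ C * |1 - ‖fderiv ℝ v x‖ ^ 2|) (x₀ y₀ : E) :
    v x₀ - v y₀ ≤ ‖x₀ - y₀‖ := by
  by_contra! hgap
  obtain ⟨σ, hσ, hσgap⟩ : ∃ σ, 0 < σ ∧ σ < v x₀ - v y₀ - ‖x₀ - y₀‖ :=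
    exists_between (sub_pos.2 hgap)
  have hlt (f : ℝ → ℝ) (hf : Continuous f) (c : ℝ) (hc : f 0 < c) : ∀ᶠ δ in 𝓝[>] 0, f δ < c :=
    ((hf.tendsto 0).mono_left nhdsWithin_le_nhds).eventually_lt_const hc
  have hsmall : ∀ᶠ δ in 𝓝[>] (0 : ℝ), 8 * B * δ < 1 :=
    hlt _ (by fun_prop) _ (by simp)
  have hpenalty : ∀ᶠ δ in 𝓝[>] (0 : ℝ), δ * ‖x₀‖ ^ 2 < v x₀ - v y₀ - ‖x₀ - y₀‖ - σ :=
    hlt _ (by fun_prop) _ (by simpa using hσgap)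
  have herror : ∀ᶠ δ in 𝓝[>] (0 : ℝ), 2 * Module.finrank ℝ E * δ +
      C * (√(8 * B * δ) * (2 + √(8 * B * δ))) < m * σ :=
    hlt _ (by fun_prop) _ (by simpa using mul_pos hm hσ)
  obtain ⟨δ, hδ, hBδ, hx₀, herr⟩ :=
    (eventually_mem_nhdsWithin.and (hsmall.and (hpenalty.and herror))).exists
  have hp : σ ≤ twoPointFunctional v δ (x₀, y₀) := by
    simp only [twoPointFunctional]
    linarith
  obtain ⟨x, y, hσv, hx_ne, hunit, hclose, hlap⟩ :=
    exists_almost_critical_pair hv hv_two hB hδ hBδ hσ hp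
  have hhx : |Δ v x - h x| ≤ C * (√(8 * B * δ) * (2 + √(8 * B * δ))) :=
    (hΔ x hx_ne).trans <| by
      gcongr
      exact abs_one_sub_norm_sq_le hunit (le_sqrt_of_sq_le hclose)
  have hhy : Δ v y = h y := by
    have := hΔ y (norm_ne_zero_iff.1 (hunit ▸ one_ne_zero))
    simpa [hunit, sub_eq_zero] using this
  have hgrowth : m * σ ≤ h x - h y :=
    (mul_le_mul_of_nonneg_left hσv hm.le).trans (hmono x y (by linarith))
  linarith [(abs_le.mp hhx).1]

theorem norm_fderiv_le_one_of_abs_laplacian_sub_le (hv : Differentiable ℝ v)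
    (hv_two : ∀ x, fderiv ℝ v x ≠ 0 → ContDiffAt ℝ 2 v x) (hB : ∀ x, |v x| ≤ B)
    {h : E → ℝ} {m C : ℝ} (hm : 0 < m) (hC : 0 ≤ C)
    (hmono : ∀ x y, v y ≤ v x → m * (v x - v y) ≤ h x - h y)
    (hΔ : ∀ x, fderiv ℝ v x ≠ 0 → |Δ v x - h x| ≤ C * |1 - ‖fderiv ℝ v x‖ ^ 2|) (x : E) :
    ‖fderiv ℝ v x‖ ≤ 1 := by
  have hlip : LipschitzWith 1 v := .of_le_add fun x y => by
    have := sub_le_norm_sub_of_abs_laplacian_sub_le hv hv_two hB hm hC hmono hΔ x y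
    rw [dist_eq_norm]
    linarith
  simpa using norm_fderiv_le_of_lipschitz ℝ hlip (x₀ := x)

end TwoPoint

section Calculus

variable {α β : ℝ}

theorem fderiv_eq_zero_of_notMem_Ioo {V : Type*} [NormedAddCommGroup V] [NormedSpace ℝ V]
    {u : V → ℝ} (hu : ∀ x, u x ∈ Icc α β) {x : V} (hx : u x ∉ Ioo α β) : fderiv ℝ u x = 0 := by
  rcases (hu x).1.eq_or_lt with hα | hα
  · exact IsLocalMin.fderiv_eq_zero (Eventually.of_forall fun z => hα ▸ (hu z).1)
  · have hβ : β ≤ u x := not_lt.1 fun hβ => hx ⟨hα, hβ⟩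
    exact IsLocalMax.fderiv_eq_zero (Eventually.of_forall fun z => (hu z).2.trans hβ)

theorem mem_Ioo_of_fderiv_comp_ne_zero {V : Type*} [NormedAddCommGroup V] [NormedSpace ℝ V]
    {P : ℝ → ℝ} {u : V → ℝ} (hu : ∀ x, u x ∈ Icc α β) {x : V} (hux : DifferentiableAt ℝ u x)
    (hP : DifferentiableAt ℝ P (u x)) (hx : fderiv ℝ (P ∘ u) x ≠ 0) : u x ∈ Ioo α β := by
  by_contra hend
  rw [(hP.hasDerivAt.comp_hasFDerivAt x hux.hasFDerivAt).fderiv,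
    fderiv_eq_zero_of_notMem_Ioo hu hend, smul_zero] at hx
  exact hx rfl

theorem exists_abs_deriv_le_of_contDiffOn_Icc {G : ℝ → ℝ} (hG : ContDiffOn ℝ 1 G (Icc α β)) :
    ∃ N, 0 ≤ N ∧ ∀ s ∈ Ioo α β, |deriv G s| ≤ N := by
  rcases lt_or_ge α β with hlt | hge
  · obtain ⟨N, hN⟩ := isCompact_Icc.exists_bound_of_continuousOn
      (hG.continuousOn_derivWithin (uniqueDiffOn_Icc hlt) le_rfl)
    refine ⟨N, (norm_nonneg _).trans (hN α (left_mem_Icc.2 hlt.le)), fun s hs => ?_⟩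
    rw [← derivWithin_of_mem_nhds (Icc_mem_nhds hs.1 hs.2)]
    exact hN s (Ioo_subset_Icc_self hs)
  · exact ⟨0, le_rfl, by simp [Ioo_eq_empty hge.not_gt]⟩

theorem exists_hasDerivAt_of_continuousOn_Icc {g : ℝ → ℝ} (hαβ : α ≤ β)
    (hg : ContinuousOn g (Icc α β)) : ∃ P : ℝ → ℝ, ∀ s ∈ Icc α β, HasDerivAt P (g s) s := by
  have hext : Continuous (IccExtend hαβ ((Icc α β).domRestrict g)) :=
    (continuousOn_iff_continuous_domRestrict.1 hg).Icc_extend'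
  refine ⟨fun s => ∫ t in α..s, IccExtend hαβ ((Icc α β).domRestrict g) t, fun s hs => ?_⟩
  have hderiv := intervalIntegral.integral_hasDerivAt_right (hext.intervalIntegrable α s)
    hext.aestronglyMeasurable.stronglyMeasurableAtFilter hext.continuousAt
  rwa [IccExtend_of_mem hαβ _ hs] at hderiv

theorem contDiffAt_succ_of_eventually_hasDerivAt {n : ℕ} {P g : ℝ → ℝ} {s : ℝ}
    (hP : ∀ᶠ t in 𝓝 s, HasDerivAt P (g t) t) (hg : ContDiffAt ℝ n g s) :
    ContDiffAt ℝ (n + 1) P s :=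
  contDiffAt_succ_iff_hasFDerivAt.2
    ⟨fun t => .toSpanSingleton ℝ (g t), ⟨_, hP, fun _ ht => ht.out.hasFDerivAt⟩,
      (ContinuousLinearMap.toSpanSingletonCLE (𝕜 := ℝ) (E := ℝ)).contDiff.contDiffAt.comp s hg⟩

end Calculus

section Profile

/-- The reciprocal of the speed `√(2 G q)` at which a one-dimensional profile, that is a solution
of `q' = √(2 G q)`, passes through the value `s`. Its primitive is the inverse of the profile. -/
noncomputable def slowness (G : ℝ → ℝ) (s : ℝ) : ℝ :=
  (√(2 * G s))⁻¹

variable {G : ℝ → ℝ} {s : ℝ}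

theorem slowness_pos (hG : 0 < G s) : 0 < slowness G s := by
  unfold slowness
  positivity

theorem slowness_sq (hG : 0 ≤ G s) : slowness G s ^ 2 = (2 * G s)⁻¹ := by
  rw [slowness, inv_pow, sq_sqrt (by positivity)]

theorem continuousOn_slowness {S : Set ℝ} (hG : ContinuousOn G S) (hpos : ∀ s ∈ S, 0 < G s) :
    ContinuousOn (slowness G) S :=
  (hG.const_mul 2).sqrt.inv₀ fun s hs => (sqrt_pos.2 (mul_pos two_pos (hpos s hs))).ne'

theorem exists_abs_slowness_mul_deriv_le {α β : ℝ} (hG : ContDiffOn ℝ 1 G (Icc α β))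
    (hpos : ∀ s ∈ Icc α β, 0 < G s) :
    ∃ C, 0 ≤ C ∧ ∀ s ∈ Ioo α β, |slowness G s * deriv G s| ≤ C := by
  obtain ⟨M, hM⟩ := isCompact_Icc.exists_bound_of_continuousOn
    (continuousOn_slowness hG.continuousOn hpos)
  obtain ⟨N, hN, hGN⟩ := exists_abs_deriv_le_of_contDiffOn_Icc hG
  refine ⟨|M| * N, by positivity, fun s hs => ?_⟩
  have hslow : |slowness G s| ≤ |M| := (hM s (Ioo_subset_Icc_self hs)).trans (le_abs_self M)
  rw [abs_mul]
  exact mul_le_mul hslow (hGN s hs) (abs_nonneg _) (abs_nonneg _)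

theorem contDiffAt_slowness {n : WithTop ℕ∞} (hG : ContDiffAt ℝ n G s) (hpos : 0 < G s) :
    ContDiffAt ℝ n (slowness G) s :=
  ((contDiffAt_const.mul hG).sqrt (by positivity)).inv (by positivity)

theorem hasDerivAt_slowness {G' : ℝ} (hG : HasDerivAt G G' s) (hpos : 0 < G s) :
    HasDerivAt (slowness G) (-(G' * slowness G s ^ 3)) s := by
  have hsqrt : √(2 * G s) ≠ 0 := by positivity
  refine (((hG.const_mul 2).sqrt (by positivity)).inv hsqrt).congr_deriv ?_
  unfold slowness
  field_simp

variable {P : ℝ → ℝ} {α β : ℝ}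

theorem contDiffAt_two_primitive_slowness (hP : ∀ᶠ t in 𝓝 s, HasDerivAt P (slowness G t) t)
    (hG : ContDiffAt ℝ 1 G s) (hpos : 0 < G s) : ContDiffAt ℝ 2 P s := by
  exact_mod_cast contDiffAt_succ_of_eventually_hasDerivAt (n := 1) hP
    (contDiffAt_slowness hG hpos)

theorem strictMonoOn_primitive_slowness (hpos : ∀ s ∈ Icc α β, 0 < G s)
    (hP : ∀ s ∈ Icc α β, HasDerivAt P (slowness G s) s) : StrictMonoOn P (Icc α β) := by
  refine strictMonoOn_of_deriv_pos (convex_Icc α β)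
    (fun s hs => (hP s hs).continuousAt.continuousWithinAt) fun s hs => ?_
  have hs' := interior_subset hs
  rw [(hP s hs').deriv]
  exact slowness_pos (hpos s hs')

theorem monotoneOn_mul_slowness_sub {k : ℝ → ℝ} {m : ℝ}
    (hG : ContDiffOn ℝ 1 G (Icc α β)) (hpos : ∀ s ∈ Icc α β, 0 < G s)
    (hP : ∀ s ∈ Icc α β, HasDerivAt P (slowness G s) s)
    (hk : ContinuousOn k (Icc α β)) (hk' : DifferentiableOn ℝ k (Ioo α β))
    (hmk : ∀ s ∈ Ioo α β, m ≤ deriv k s - k s * deriv G s / (2 * G s)) :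
    MonotoneOn (fun s => k s * slowness G s - m * P s) (Icc α β) := by
  have hderiv (s) (hs : s ∈ Ioo α β) : HasDerivAt (fun s => k s * slowness G s - m * P s)
      (slowness G s * (deriv k s - k s * deriv G s / (2 * G s) - m)) s := by
    have hs' := Ioo_subset_Icc_self hs
    have hGs := (hG.contDiffAt (Icc_mem_nhds hs.1 hs.2)).differentiableAt one_ne_zero
    have hks := hk'.differentiableAt (Ioo_mem_nhds hs.1 hs.2)
    refine ((hks.hasDerivAt.mul (hasDerivAt_slowness hGs.hasDerivAt (hpos s hs'))).sub
      ((hP s hs').const_mul m)).congr_deriv ?_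
    rw [div_eq_mul_inv, ← slowness_sq (hpos s hs').le]
    ring
  have hcont : ContinuousOn (fun s => k s * slowness G s - m * P s) (Icc α β) :=
    (hk.mul (continuousOn_slowness hG.continuousOn hpos)).sub
      (.const_mul (fun s hs => (hP s hs).continuousAt.continuousWithinAt) m)
  refine monotoneOn_of_deriv_nonneg (convex_Icc α β) hcont ?_ ?_ <;> rw [interior_Icc]
  · exact fun s hs => (hderiv s hs).differentiableAt.differentiableWithinAt
  · intro s hs
    rw [(hderiv s hs).deriv]
    exact mul_nonneg (slowness_pos (hpos s (Ioo_subset_Icc_self hs))).le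
      (sub_nonneg.2 (hmk s hs))

theorem norm_fderiv_primitive_slowness_comp_sq {V : Type*} [NormedAddCommGroup V]
    [NormedSpace ℝ V] {u : V → ℝ} {x : V}
    (hP : HasDerivAt P (slowness G (u x)) (u x)) (hu : DifferentiableAt ℝ u x)
    (hG : 0 ≤ G (u x)) :
    ‖fderiv ℝ (P ∘ u) x‖ ^ 2 = ‖fderiv ℝ u x‖ ^ 2 / (2 * G (u x)) := by
  rw [(hP.comp_hasFDerivAt x hu.hasFDerivAt).fderiv, norm_smul, mul_pow, Real.norm_eq_abs, sq_abs,
    slowness_sq hG, mul_comm, div_eq_mul_inv]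

variable {E : Type*} [NormedAddCommGroup E] [InnerProductSpace ℝ E] [FiniteDimensional ℝ E]
  {u : E → ℝ}

theorem laplacian_primitive_slowness_comp {x : E}
    (hP : ∀ᶠ s in 𝓝 (u x), HasDerivAt P (slowness G s) s) (hG : ContDiffAt ℝ 1 G (u x))
    (hpos : 0 < G (u x)) (hu : ContDiffAt ℝ 2 u x) :
    Δ (P ∘ u) x = slowness G (u x) *
      (Δ u x - deriv G (u x) * ‖fderiv ℝ (P ∘ u) x‖ ^ 2) := by
  have hderiv : deriv P =ᶠ[𝓝 (u x)] slowness G := hP.mono fun s hs => hs.deriv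
  have hsnd : deriv (deriv P) (u x) = -(deriv G (u x) * slowness G (u x) ^ 3) := by
    rw [hderiv.deriv_eq]
    exact (hasDerivAt_slowness (hG.differentiableAt one_ne_zero).hasDerivAt hpos).deriv
  have hnorm := norm_fderiv_primitive_slowness_comp_sq hP.self_of_nhds
    (hu.differentiableAt two_ne_zero) hpos.le
  rw [laplacian_comp (contDiffAt_two_primitive_slowness hP hG hpos) hu, hsnd,
    hderiv.self_of_nhds, hnorm, div_eq_mul_inv, ← slowness_sq hpos.le]
  ring

theorem norm_fderiv_primitive_slowness_comp_le_one {k : ℝ → ℝ} {m : ℝ}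
    (hG : ContDiffOn ℝ 1 G (Icc α β)) (hpos : ∀ s ∈ Icc α β, 0 < G s)
    (hP : ∀ s ∈ Icc α β, HasDerivAt P (slowness G s) s)
    (hk : ContinuousOn k (Icc α β)) (hk' : DifferentiableOn ℝ k (Ioo α β)) (hm : 0 < m)
    (hmk : ∀ s ∈ Ioo α β, m ≤ deriv k s - k s * deriv G s / (2 * G s))
    (hu : ContDiff ℝ 2 u) (hmem : ∀ x, u x ∈ Icc α β)
    (hΔ : ∀ x, u x ∈ Ioo α β → Δ u x = deriv G (u x) + k (u x)) (x : E) :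
    ‖fderiv ℝ (P ∘ u) x‖ ≤ 1 := by
  obtain ⟨B, hB⟩ := isCompact_Icc.exists_bound_of_continuousOn
    (fun s hs => (hP s hs).continuousAt.continuousWithinAt : ContinuousOn P (Icc α β))
  obtain ⟨C, hC, hGC⟩ := exists_abs_slowness_mul_deriv_le hG hpos
  have hu' : Differentiable ℝ u := hu.differentiable two_ne_zero
  have hPu (z) : DifferentiableAt ℝ P (u z) := (hP _ (hmem z)).differentiableAt
  have hinterior (z) (hz : fderiv ℝ (P ∘ u) z ≠ 0) : u z ∈ Ioo α β :=
    mem_Ioo_of_fderiv_comp_ne_zero hmem (hu' z) (hPu z) hz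
  have hP_nhds (s) (hs : s ∈ Ioo α β) : ∀ᶠ t in 𝓝 s, HasDerivAt P (slowness G t) t :=
    eventually_of_mem (Icc_mem_nhds hs.1 hs.2) hP
  have hG_at (s) (hs : s ∈ Ioo α β) : ContDiffAt ℝ 1 G s :=
    hG.contDiffAt (Icc_mem_nhds hs.1 hs.2)
  refine norm_fderiv_le_one_of_abs_laplacian_sub_le
    (h := fun z => k (u z) * slowness G (u z)) (fun z => (hPu z).comp z (hu' z))
    (fun z hz => ?_) (fun z => hB _ (hmem z)) hm hC (fun y z hzy => ?_) (fun z hz => ?_) x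
  · have hz' := hinterior z hz
    exact (contDiffAt_two_primitive_slowness (hP_nhds _ hz') (hG_at _ hz')
      (hpos _ (hmem z))).comp z hu.contDiffAt
  · have hle : u z ≤ u y :=
      ((strictMonoOn_primitive_slowness hpos hP).le_iff_le (hmem z) (hmem y)).1 hzy
    have := monotoneOn_mul_slowness_sub hG hpos hP hk hk' hmk (hmem z) (hmem y) hle
    simp only [Function.comp_apply]
    linarith
  · have hz' := hinterior z hz
    have hdefect : Δ (P ∘ u) z - k (u z) * slowness G (u z) =
        slowness G (u z) * deriv G (u z) * (1 - ‖fderiv ℝ (P ∘ u) z‖ ^ 2) := by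
      rw [laplacian_primitive_slowness_comp (hP_nhds _ hz') (hG_at _ hz') (hpos _ (hmem z))
        hu.contDiffAt, hΔ z hz']
      ring
    rw [hdefect, abs_mul]
    exact mul_le_mul_of_nonneg_right (hGC _ hz') (abs_nonneg _)

theorem norm_fderiv_sq_le_of_laplacian_eq_deriv_add {k : ℝ → ℝ} {m : ℝ}
    (hG : ContDiffOn ℝ 1 G (Icc α β)) (hpos : ∀ s ∈ Icc α β, 0 < G s)
    (hk : ContinuousOn k (Icc α β)) (hk' : DifferentiableOn ℝ k (Ioo α β)) (hm : 0 < m)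
    (hmk : ∀ s ∈ Ioo α β, m ≤ deriv k s - k s * deriv G s / (2 * G s))
    (hu : ContDiff ℝ 2 u) (hmem : ∀ x, u x ∈ Icc α β)
    (hΔ : ∀ x, u x ∈ Ioo α β → Δ u x = deriv G (u x) + k (u x)) (x : E) :
    ‖fderiv ℝ u x‖ ^ 2 ≤ 2 * G (u x) := by
  obtain ⟨P, hP⟩ := exists_hasDerivAt_of_continuousOn_Icc ((hmem x).1.trans (hmem x).2)
    (continuousOn_slowness hG.continuousOn hpos)
  have hGx : 0 < 2 * G (u x) := mul_pos two_pos (hpos _ (hmem x))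
  have hle := norm_fderiv_primitive_slowness_comp_le_one hG hpos hP hk hk' hm hmk hu hmem hΔ x
  rwa [← sq_le_one_iff₀ (norm_nonneg _), norm_fderiv_primitive_slowness_comp_sq (hP _ (hmem x))
    (hu.differentiable two_ne_zero x) (hpos _ (hmem x)).le, div_le_one hGx] at hle

end Profile

section Modica

/-- A concave decreasing function with values in `[c / 2, c]` on `(-∞, β]`. Adding it to the
potential `F` makes the potential positive and the comparison with the profile strict. -/
noncomputable def concaveBarrier (c K β s : ℝ) : ℝ :=
  c * (1 - exp (K * (s - β)) / 2)

/-- The opposite of the derivative of `concaveBarrier c K β`. -/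
noncomputable def barrierSlope (c K β s : ℝ) : ℝ :=
  c * K / 2 * exp (K * (s - β))

variable {c K α β s : ℝ}

theorem hasDerivAt_exp_mul_sub (K β s : ℝ) :
    HasDerivAt (fun s => exp (K * (s - β))) (K * exp (K * (s - β))) s :=
  ((((hasDerivAt_id s).sub_const β).const_mul K).exp).congr_deriv (by simp [mul_comm])

theorem hasDerivAt_concaveBarrier (c K β s : ℝ) :
    HasDerivAt (concaveBarrier c K β) (-barrierSlope c K β s) s :=
  ((((hasDerivAt_exp_mul_sub K β s).div_const 2).const_sub 1).const_mul c).congr_deriv (by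
    unfold barrierSlope
    ring)

theorem hasDerivAt_barrierSlope (c K β s : ℝ) :
    HasDerivAt (barrierSlope c K β) (K * barrierSlope c K β s) s :=
  ((hasDerivAt_exp_mul_sub K β s).const_mul (c * K / 2)).congr_deriv (by
    unfold barrierSlope
    ring)

theorem contDiff_concaveBarrier (c K β : ℝ) : ContDiff ℝ 1 (concaveBarrier c K β) := by
  unfold concaveBarrier
  fun_prop

theorem barrierSlope_pos (hc : 0 < c) (hK : 0 < K) (β s : ℝ) : 0 < barrierSlope c K β s := by
  unfold barrierSlope
  positivity

theorem monotone_barrierSlope (hc : 0 ≤ c) (hK : 0 ≤ K) : Monotone (barrierSlope c K β) :=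
  fun s t hst => by
    unfold barrierSlope
    gcongr

theorem half_le_concaveBarrier (hc : 0 ≤ c) (hK : 0 ≤ K) (hs : s ≤ β) :
    c / 2 ≤ concaveBarrier c K β s := by
  have hexp : exp (K * (s - β)) ≤ 1 :=
    exp_le_one_iff.2 (mul_nonpos_of_nonneg_of_nonpos hK (sub_nonpos.2 hs))
  have := mul_le_mul_of_nonneg_left hexp hc
  unfold concaveBarrier
  linarith

theorem concaveBarrier_le (hc : 0 ≤ c) : concaveBarrier c K β s ≤ c := by
  have : 0 ≤ c * exp (K * (s - β)) := by positivity
  unfold concaveBarrier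
  linarith

theorem barrierSlope_le_deriv_sub {G : ℝ → ℝ} {N : ℝ} (hc : 0 < c) (hN : 0 ≤ N)
    (hK : K = N / c + 1) (hαs : α ≤ s) (hG : c ≤ 2 * G s) (hG' : deriv G s ≤ N) :
    barrierSlope c K β α ≤
      deriv (barrierSlope c K β) s - barrierSlope c K β s * deriv G s / (2 * G s) := by
  have hKpos : 0 < K := by rw [hK]; positivity
  have hGpos : 0 < 2 * G s := hc.trans_le hG
  have hquot : deriv G s / (2 * G s) ≤ N / c :=
    calc deriv G s / (2 * G s) ≤ N / (2 * G s) := by gcongr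
      _ ≤ N / c := by gcongr
  calc barrierSlope c K β α ≤ barrierSlope c K β s :=
        monotone_barrierSlope hc.le hKpos.le hαs
    _ ≤ barrierSlope c K β s * (K - deriv G s / (2 * G s)) :=
        le_mul_of_one_le_right (barrierSlope_pos hc hKpos β s).le (by linarith)
    _ = deriv (barrierSlope c K β) s - barrierSlope c K β s * deriv G s / (2 * G s) := by
        rw [(hasDerivAt_barrierSlope c K β s).deriv]
        ring

variable {E : Type*} [NormedAddCommGroup E] [InnerProductSpace ℝ E] [FiniteDimensional ℝ E]
  {F : ℝ → ℝ} {u : E → ℝ}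

theorem norm_fderiv_sq_le_two_mul_add (hF : ContDiffOn ℝ 1 F (Icc α β))
    (hFnonneg : ∀ s ∈ Icc α β, 0 ≤ F s) (hu : ContDiff ℝ 2 u) (hmem : ∀ x, u x ∈ Icc α β)
    (hpde : ∀ x, u x ∈ Ioo α β → Δ u x = deriv F (u x)) (hc : 0 < c) (x : E) :
    ‖fderiv ℝ u x‖ ^ 2 ≤ 2 * (F (u x) + c) := by
  obtain ⟨N, hN, hFN⟩ := exists_abs_deriv_le_of_contDiffOn_Icc hF
  obtain ⟨K, hK⟩ : ∃ K, K = N / c + 1 := ⟨_, rfl⟩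
  have hKpos : 0 < K := by rw [hK]; positivity
  set G : ℝ → ℝ := F + concaveBarrier c K β with hGdef
  have hGlower (s) (hs : s ∈ Icc α β) : c ≤ 2 * G s := by
    have := half_le_concaveBarrier hc.le hKpos.le hs.2
    simp only [hGdef, Pi.add_apply]
    linarith [hFnonneg s hs]
  have hG : ContDiffOn ℝ 1 G (Icc α β) := hF.add (contDiff_concaveBarrier c K β).contDiffOn
  have hGpos (s) (hs : s ∈ Icc α β) : 0 < G s := by linarith [hGlower s hs]
  have hG' (s) (hs : s ∈ Ioo α β) : deriv G s = deriv F s - barrierSlope c K β s :=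
    (((hF.differentiableOn one_ne_zero).differentiableAt
      (Icc_mem_nhds hs.1 hs.2)).hasDerivAt.add (hasDerivAt_concaveBarrier c K β s)).deriv
  have hslope : Differentiable ℝ (barrierSlope c K β) := fun s =>
    (hasDerivAt_barrierSlope c K β s).differentiableAt
  calc ‖fderiv ℝ u x‖ ^ 2 ≤ 2 * G (u x) := by
        refine norm_fderiv_sq_le_of_laplacian_eq_deriv_add hG hGpos
          hslope.continuous.continuousOn hslope.differentiableOn
          (barrierSlope_pos hc hKpos β α) (fun s hs => ?_) hu hmem (fun z hz => ?_) x
        · refine barrierSlope_le_deriv_sub hc hN hK hs.1.le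
            (hGlower s (Ioo_subset_Icc_self hs)) ?_
          rw [hG' s hs]
          linarith [(abs_le.mp (hFN s hs)).2, barrierSlope_pos hc hKpos β s]
        · rw [hpde z hz, hG' _ hz, sub_add_cancel]
    _ ≤ 2 * (F (u x) + c) := by
        simp only [hGdef, Pi.add_apply]
        gcongr
        exact concaveBarrier_le hc.le

theorem stmt_2_general {E : Type*} [NormedAddCommGroup E] [InnerProductSpace ℝ E]
    [FiniteDimensional ℝ E] {α β : ℝ} (F : ℝ → ℝ) (u : E → ℝ) (hF : ContDiffOn ℝ 1 F (Icc α β))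
    (hFnonneg : ∀ s ∈ Icc α β, 0 ≤ F s) (hu : ContDiff ℝ 2 u) (hmem : ∀ x, u x ∈ Icc α β)
    (hpde : ∀ x, u x ∈ Ioo α β → Δ u x = deriv F (u x)) (x : E) :
    ‖fderiv ℝ u x‖ ^ 2 ≤ 2 * F (u x) :=
  le_of_forall_pos_le_add fun ε hε =>
    calc ‖fderiv ℝ u x‖ ^ 2 ≤ 2 * (F (u x) + ε / 2) :=
          norm_fderiv_sq_le_two_mul_add hF hFnonneg hu hmem hpde (half_pos hε) x
      _ = 2 * F (u x) + ε := by ring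

end Modica

/-- Modica's gradient estimate for entire solutions of Allen–Cahn in the plane. -/
theorem stmt_2
    (F : ℝ → ℝ) (u : ℝ → ℝ → ℝ)
    (hF : ContDiffOn ℝ 2 F (Set.Icc (-1) 1))
    (hFnonneg : ∀ s ∈ Set.Icc (-1 : ℝ) 1, 0 ≤ F s)
    (hu : ContDiff ℝ 2 (fun p : ℝ × ℝ => u p.1 p.2))
    (hub : ∀ x y : ℝ, |u x y| ≤ 1)
    (hpde : ∀ x y : ℝ,
      deriv (deriv (fun t => u t y)) x + deriv (deriv (u x)) y = deriv F (u x y)) :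
    ∀ x y : ℝ,
      (deriv (fun t => u t y) x) ^ 2 + (deriv (u x) y) ^ 2 ≤ 2 * F (u x y) := by
  intro x y
  have hU := contDiff_comp_euclideanPlane hu
  have hestimate := stmt_2_general F (fun p : EuclideanSpace ℝ (Fin 2) => u (p 0) (p 1))
    (hF.of_le one_le_two) hFnonneg hU (fun p => abs_le.mp (hub _ _))
    (fun p _ => (laplacian_euclideanPlane hU.contDiffAt).trans (hpde _ _)) !₂[x, y]
  rwa [norm_fderiv_euclideanPlane_sq (hU.differentiable two_ne_zero _)] at hestimate
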